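/- Let n ≥ 3 be odd and let f : ℝⁿ → ℝ be a smooth function whose support is a compact subset of the open unit ball B = {x ∈ ℝⁿ : |x| < 1}. For θ ∈ S^{n-1} let ψ_θ(t) = (M(Δf))(θ,t) be the spherical mean of the Laplacian Δf. Then for every x ∈ B, f(x) = ((−1)^{(n−1)/2} π^{1−n/2} / (4 Γ(n/2))) · ∫_{S^{n-1}} [D^{n-3}(t ↦ t^{n-2} ψ_θ(t))]|_{t=|x−θ|} dθ. -/

import Mathlib

open MeasureTheory Metric

/-- The surface measure on the unit sphere `S^{n-1}` in `ℝⁿ`. -/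
noncomputable def sphereMeasure (n : ℕ) : Measure (sphere (0 : EuclideanSpace ℝ (Fin n)) 1) :=
  (volume : Measure (EuclideanSpace ℝ (Fin n))).toSphere

/-- The operator `D = (1/(2t)) d/dt`. -/
noncomputable def Dop (g : ℝ → ℝ) : ℝ → ℝ := fun t => (1 / (2 * t)) * deriv g t

/-- The Laplacian `Δ f = ∑ ∂²f/∂x_i²` on `ℝⁿ`. -/
noncomputable def lap {n : ℕ} (f : EuclideanSpace ℝ (Fin n) → ℝ)
    (x : EuclideanSpace ℝ (Fin n)) : ℝ :=
  ∑ i : Fin n, iteratedFDeriv ℝ 2 f x ![EuclideanSpace.single i 1, EuclideanSpace.single i 1]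

section Part1
open MeasureTheory Metric Set Measure
section polar
variable {E : Type} [NormedAddCommGroup E] [NormedSpace ℝ E] [MeasurableSpace E] [BorelSpace E]
  [FiniteDimensional ℝ E] [Nontrivial E] (μ : Measure E) [μ.IsAddHaarMeasure]

theorem polar_prod (G : E → ℝ) :
    ∫ z, G z ∂μ = ∫ p : sphere (0 : E) 1 × Ioi (0:ℝ), G ((p.2 : ℝ) • (p.1 : E))
      ∂(μ.toSphere.prod (volumeIoiPow (Module.finrank ℝ E - 1))) := by
  have h := μ.measurePreserving_homeomorphUnitSphereProd.integral_comp
        (Homeomorph.measurableEmbedding _) (fun p : sphere (0 : E) 1 × Ioi (0:ℝ) => G ((p.2 : ℝ) • (p.1 : E)))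
  rw [← h]
  have h2 : ∀ z : ({0}ᶜ : Set E), G (((homeomorphUnitSphereProd E z).2 : ℝ) • ((homeomorphUnitSphereProd E z).1 : E)) = G z := by
    intro z
    have : ‖(z:E)‖ ≠ 0 := norm_ne_zero_iff.2 z.2
    simp [smul_smul, this]
  simp_rw [h2]
  rw [integral_subtype_comap (measurableSet_singleton _).compl G, restrict_compl_singleton]

theorem polar_integrable {G : E → ℝ} (hG : Integrable G μ) :
    Integrable (fun p : sphere (0 : E) 1 × Ioi (0:ℝ) => G ((p.2 : ℝ) • (p.1 : E)))
      (μ.toSphere.prod (volumeIoiPow (Module.finrank ℝ E - 1))) := by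
  have h := μ.measurePreserving_homeomorphUnitSphereProd.integrable_comp_emb
        (Homeomorph.measurableEmbedding _) (g := fun p : sphere (0 : E) 1 × Ioi (0:ℝ) => G ((p.2 : ℝ) • (p.1 : E)))
  rw [← h]
  have h2 : ((fun p : sphere (0 : E) 1 × Ioi (0:ℝ) => G ((p.2 : ℝ) • (p.1 : E))) ∘ homeomorphUnitSphereProd E) = G ∘ Subtype.val := by
    funext z
    have : ‖(z:E)‖ ≠ 0 := norm_ne_zero_iff.2 z.2
    simp [smul_smul, this]
  rw [h2, ← integrableOn_iff_comap_subtypeVal (by measurability), IntegrableOn, restrict_compl_singleton]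
  exact hG

theorem integral_volumeIoiPow (N : ℕ) (F : ℝ → ℝ) :
    ∫ x : Ioi (0 : ℝ), F x ∂(volumeIoiPow N) = ∫ r in Ioi (0:ℝ), r ^ N * F r := by
  simp only [Measure.volumeIoiPow, ENNReal.ofReal]
  rw [integral_withDensity_eq_integral_smul,
        integral_subtype_comap measurableSet_Ioi fun a ↦ Real.toNNReal (a ^ N) • F a,
        setIntegral_congr_fun measurableSet_Ioi fun x hx ↦ ?_]
  · simp only [NNReal.smul_def, Real.coe_toNNReal _ (pow_nonneg (le_of_lt hx) N), smul_eq_mul]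
  · exact (measurable_subtype_coe.pow_const _).real_toNNReal

theorem polar1 {G : E → ℝ} (hG : Integrable G μ) :
    ∫ z, G z ∂μ = ∫ θ : sphere (0 : E) 1, (∫ r in Ioi (0:ℝ), r ^ (Module.finrank ℝ E - 1) * G (r • (θ : E)))
      ∂(μ.toSphere) := by
  rw [polar_prod, integral_prod _ (polar_integrable μ hG)]
  congr 1; funext θ
  exact integral_volumeIoiPow _ (fun r => G (r • (θ : E)))

theorem polar2 {G : E → ℝ} (hG : Integrable G μ) :
    ∫ z, G z ∂μ = ∫ r in Ioi (0:ℝ), r ^ (Module.finrank ℝ E - 1) * ∫ θ : sphere (0 : E) 1, G (r • (θ : E))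
      ∂(μ.toSphere) := by
  rw [polar_prod, integral_prod_symm _ (polar_integrable μ hG)]
  exact integral_volumeIoiPow _ (fun r => ∫ θ : sphere (0 : E) 1, G (r • (θ : E)) ∂(μ.toSphere))

end polar

end Part1

section Part2
open MeasureTheory Metric Set Measure
section slice

/-- Euclidean space -/
abbrev EE (n : ℕ) : Type := EuclideanSpace ℝ (Fin n)

theorem split_integral (N : ℕ) (H : ℝ → ℝ → ℝ) :
    ∫ z : EuclideanSpace ℝ (Fin (N+1)), H (z 0) ‖z‖ =
      ∫ p : ℝ × EuclideanSpace ℝ (Fin N), H p.1 (√(p.1^2 + ‖p.2‖^2)) := by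
  rw [← (PiLp.volume_preserving_toLp (Fin (N+1))).integral_comp
    (MeasurableEquiv.toLp 2 _).measurableEmbedding]
  rw [← ((volume_preserving_piFinSuccAbove (fun _ : Fin (N+1) => ℝ) 0).symm).integral_comp']
  refine Eq.trans ?_ (((MeasurePreserving.id (volume : Measure ℝ)).prod
    (PiLp.volume_preserving_toLp (Fin N))).integral_comp
    ((MeasurableEquiv.refl ℝ).prodCongr (MeasurableEquiv.toLp 2 (Fin N → ℝ))).measurableEmbedding
    (fun p : ℝ × EuclideanSpace ℝ (Fin N) => H p.1 (√(p.1^2 + ‖p.2‖^2))))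
  congr 1
  funext p
  simp [MeasurableEquiv.piFinSuccAbove_symm_apply, Fin.insertNthEquiv, EuclideanSpace.norm_eq, Fin.sum_univ_succ]
  congr 2
  rw [Real.sq_sqrt]
  exact Finset.sum_nonneg fun i _ => sq_nonneg _

theorem bdd_integrable {α : Type} [MeasurableSpace α] {μ : Measure α} {F : α → ℝ} {s : Set α}
    (hF : Measurable F) (hs : μ s < ⊤) (C : ℝ) (hC : ∀ x, ‖F x‖ ≤ C)
    (h0 : ∀ x, x ∉ s → F x = 0) : Integrable F μ := by
  have : Integrable F (μ.restrict s) := by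
    have : IsFiniteMeasure (μ.restrict s) := ⟨by simpa using hs⟩
    exact Integrable.of_bound hF.aestronglyMeasurable C (.of_forall hC)
  exact (integrableOn_iff_integrable_of_support_subset (s := s) (fun x hx => by
    by_contra h; exact hx (h0 x h))).1 this

/-- cutoff -/
noncomputable def cutf (r : ℝ) : ℝ := if r < 1 then 1 else 0

theorem measurable_cutf : Measurable cutf :=
  Measurable.ite measurableSet_Iio measurable_const measurable_const

theorem plane_integral (N : ℕ) (F : ℝ → ℝ) (hF : Measurable F) (C : ℝ) (hC : ∀ s, |F s| ≤ C) :
    ∫ t : ℝ, ∫ q in Ioi (0:ℝ), q ^ N * (F (t / √(t^2+q^2)) * cutf (√(t^2+q^2))) =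
      (∫ r in Ioi (0:ℝ), r ^ (N+1) * cutf r) * ∫ α in (0:ℝ)..Real.pi, F (Real.cos α) * Real.sin α ^ N := by
  set G : ℝ × ℝ → ℝ := fun p => (Ioi (0:ℝ)).indicator (fun q => q ^ N * (F (p.1 / √(p.1^2+q^2)) * cutf (√(p.1^2+q^2)))) p.2 with hGdef
  have hG : G = fun p => (if 0 < p.2 then 1 else 0) * (p.2 ^ N * (F (p.1 / √(p.1^2+p.2^2)) * cutf (√(p.1^2+p.2^2)))) := by
    funext p; simp [hGdef, indicator]
  have hm : Measurable G := by
    rw [hG]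
    refine Measurable.mul (Measurable.ite (measurableSet_lt measurable_const measurable_snd) measurable_const measurable_const) ?_
    refine Measurable.mul (by fun_prop) (Measurable.mul (hF.comp (by fun_prop)) (measurable_cutf.comp (by fun_prop)))
  have hC0 : 0 ≤ C := (abs_nonneg _).trans (hC 0)
  have hsm : ∀ p : ℝ × ℝ, √(p.1^2+p.2^2) < 1 → |p.1| ≤ 1 ∧ |p.2| ≤ 1 := by
    intro p hp
    have : p.1^2+p.2^2 < 1 := by
      rw [Real.sqrt_lt' one_pos] at hp; simpa using hp
    constructor <;> rw [abs_le_one_iff_mul_self_le_one] <;> nlinarith [sq_nonneg p.1, sq_nonneg p.2]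
  have hint : Integrable G (volume.prod volume) := by
    refine bdd_integrable (s := Icc (-1) 1 ×ˢ Icc (-1) 1) hm ?_ C ?_ ?_
    · rw [Measure.prod_prod]; simp
      exact ENNReal.mul_lt_top (by norm_num) (by norm_num)
    · intro p
      rw [hG]
      by_cases h : √(p.1^2+p.2^2) < 1
      · have h1 : ‖p.2 ^ N‖ ≤ 1 := by
          rw [norm_pow]; exact pow_le_one₀ (norm_nonneg _) (hsm p h).2
        have h2 := hC (p.1 / √(p.1^2+p.2^2))
        simp only [cutf, h, if_true, mul_one]
        rw [norm_mul, norm_mul]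
        have h3 : ‖(if 0 < p.2 then (1:ℝ) else 0)‖ ≤ 1 := by split_ifs <;> simp
        calc _ ≤ 1 * (1 * C) := by
              refine mul_le_mul h3 (mul_le_mul h1 h2 (norm_nonneg _) zero_le_one) (by positivity) zero_le_one
          _ = C := by ring
      · simp [cutf, h, hC0]
    · intro p hp
      rw [hG]
      have : ¬ √(p.1^2+p.2^2) < 1 := by
        intro h; apply hp
        have := hsm p h
        exact ⟨abs_le.1 this.1, abs_le.1 this.2⟩
      simp [cutf, this]
  have e1 : ∫ t : ℝ, ∫ q in Ioi (0:ℝ), q ^ N * (F (t / √(t^2+q^2)) * cutf (√(t^2+q^2))) = ∫ p, G p := by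
    rw [Measure.volume_eq_prod, integral_prod _ hint]
    congr 1; funext t
    rw [← integral_indicator measurableSet_Ioi]
  rw [e1, ← integral_comp_polarCoord_symm]
  have e2 : ∀ p ∈ polarCoord.target, p.1 • G (polarCoord.symm p) =
     (p.1 ^ (N+1) * cutf p.1) * (if 0 < Real.sin p.2 then F (Real.cos p.2) * Real.sin p.2 ^ N else 0) := by
    intro p hp
    have hp1 : 0 < p.1 := hp.1
    have hs : √((p.1 * Real.cos p.2)^2 + (p.1 * Real.sin p.2)^2) = p.1 := by
      rw [show (p.1 * Real.cos p.2)^2 + (p.1 * Real.sin p.2)^2 = p.1^2 by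
        nlinarith [Real.sin_sq_add_cos_sq p.2]]
      exact Real.sqrt_sq hp1.le
    rw [hG]
    simp only [polarCoord_symm_apply, hs, smul_eq_mul, mul_pos_iff_of_pos_left hp1]
    rw [mul_div_cancel_left₀ _ hp1.ne']
    split_ifs <;> ring
  rw [setIntegral_congr_fun polarCoord.open_target.measurableSet e2]
  have : polarCoord.target = Ioi (0:ℝ) ×ˢ Ioo (-Real.pi) Real.pi := rfl
  rw [this, Measure.volume_eq_prod, setIntegral_prod_mul (fun r : ℝ => r ^ (N+1) * cutf r)
    (fun α : ℝ => if 0 < Real.sin α then F (Real.cos α) * Real.sin α ^ N else 0)]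
  congr 1
  rw [intervalIntegral.integral_of_le Real.pi_pos.le, integral_Ioc_eq_integral_Ioo]
  have hsub : Ioo (0:ℝ) Real.pi ⊆ Ioo (-Real.pi) Real.pi := Ioo_subset_Ioo_left (by linarith [Real.pi_pos])
  rw [setIntegral_eq_of_subset_of_forall_sdiff_eq_zero measurableSet_Ioo hsub]
  · refine setIntegral_congr_fun measurableSet_Ioo fun α hα => ?_
    simp [Real.sin_pos_of_mem_Ioo hα]
  · intro α hα
    have : α ≤ 0 := by
      by_contra h
      exact hα.2 ⟨not_le.1 h, hα.1.2⟩
    have := Real.sin_nonpos_of_nonpos_of_neg_pi_le this hα.1.1.le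
    simp [not_lt.2 this]

theorem cut_pos (N : ℕ) : 0 < ∫ r in Ioi (0:ℝ), r ^ (N+1) * cutf r := by
  have : ∫ r in Ioi (0:ℝ), r ^ (N+1) * cutf r = ∫ r in (0:ℝ)..1, r ^ (N+1) := by
    rw [intervalIntegral.integral_of_le zero_le_one, integral_Ioc_eq_integral_Ioo,
      setIntegral_eq_of_subset_of_forall_sdiff_eq_zero measurableSet_Ioi (s := Ioo 0 1)]
    · refine setIntegral_congr_fun measurableSet_Ioo fun α hα => ?_
      simp [cutf, hα.2]
    · exact fun x hx => hx.1
    · intro x hx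
      have : ¬ x < 1 := fun h => hx.2 ⟨hx.1, h⟩
      simp [cutf, this]
  rw [this, integral_pow]
  simp; positivity

theorem slice (m : ℕ) (F : ℝ → ℝ) (hF : Continuous F) (C : ℝ) (hC : ∀ s, |F s| ≤ C)
    (e : EE (2*m+3)) (he : ‖e‖ = 1) :
    ∫ θ : sphere (0 : EE (2*m+3)) 1, F (inner ℝ (θ : EE (2*m+3)) e)
      ∂((volume : Measure (EE (2*m+3))).toSphere) =
    ((2*m+2 : ℕ) * (volume : Measure (EuclideanSpace ℝ (Fin (2*m+2)))).real (ball 0 1)) *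
      ∫ s in (-1:ℝ)..1, F s * (1 - s^2)^m := by
  have hdim : Module.finrank ℝ (EE (2*m+3)) - 1 = 2*m+2 := by simp
  set A := ∫ r in Ioi (0:ℝ), r ^ (2*m+1+1) * cutf r with hA
  have hApos : 0 < A := cut_pos _
  apply mul_left_cancel₀ hApos.ne'
  have hint : Integrable (fun z : EE (2*m+3) => F (inner ℝ z e / ‖z‖) * cutf ‖z‖) := by
    refine bdd_integrable (s := ball 0 1) ?_ measure_ball_lt_top C ?_ ?_
    · exact Measurable.mul (hF.measurable.comp (by fun_prop)) (measurable_cutf.comp (by fun_prop))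
    · intro z
      rw [norm_mul]
      have : ‖cutf ‖z‖‖ ≤ 1 := by unfold cutf; split_ifs <;> simp
      calc _ ≤ C * 1 := mul_le_mul (hC _) this (norm_nonneg _) ((abs_nonneg _).trans (hC 0))
        _ = C := mul_one C
    · intro z hz
      have : ¬ ‖z‖ < 1 := by simpa using hz
      simp [cutf, this]
  have e1 := polar1 (volume : Measure (EE (2*m+3))) hint
  have e2 : ∀ θ : sphere (0 : EE (2*m+3)) 1, ∫ r in Ioi (0:ℝ), r ^ (Module.finrank ℝ (EE (2*m+3)) - 1) * (F (inner ℝ (r • (θ:EE (2*m+3))) e / ‖r • (θ:EE (2*m+3))‖) * cutf ‖r • (θ:EE (2*m+3))‖)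
     = A * F (inner ℝ (θ:EE (2*m+3)) e) := by
    intro θ
    rw [hA, ← integral_mul_const]
    refine setIntegral_congr_fun measurableSet_Ioi fun r hr => ?_
    have hr : 0 < r := hr
    have hn : ‖(θ:EE (2*m+3))‖ = 1 := by simp
    simp only [norm_smul, hn, inner_smul_left, hdim, mul_one, Real.norm_eq_abs, abs_of_pos hr]
    rw [show (starRingEnd ℝ) r = r from rfl, mul_div_cancel_left₀ _ hr.ne']
    ring
  simp_rw [e2] at e1
  rw [integral_const_mul] at e1
  rw [← e1]
  -- rotation
  set e0 : EE (2*m+3) := EuclideanSpace.single 0 1 with he0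
  have hn0 : ‖e0‖ = 1 := by simp [he0]
  set R := (Submodule.span ℝ {e - e0})ᗮ.reflection
  have hR : R e = e0 := Submodule.reflection_sub (by rw [he, hn0])
  have e3 : ∫ z : EE (2*m+3), F (inner ℝ z e / ‖z‖) * cutf ‖z‖ = ∫ z : EE (2*m+3), F (z 0 / ‖z‖) * cutf ‖z‖ := by
    rw [← (R.measurePreserving).integral_comp R.toHomeomorph.measurableEmbedding (fun z : EE (2*m+3) => F (z 0 / ‖z‖) * cutf ‖z‖)]
    congr 1; funext z
    have : (R z) 0 = inner ℝ z e := by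
      rw [← R.inner_map_map z e, hR, he0, EuclideanSpace.inner_single_right]; simp
    rw [this, R.norm_map]
  rw [e3, split_integral (2*m+2) (fun t r => F (t / r) * cutf r)]
  have e4 : ∫ p : ℝ × EuclideanSpace ℝ (Fin (2*m+2)), F (p.1 / √(p.1^2 + ‖p.2‖^2)) * cutf (√(p.1^2 + ‖p.2‖^2)) =
     ∫ t : ℝ, ∫ w : EuclideanSpace ℝ (Fin (2*m+2)), F (t / √(t^2 + ‖w‖^2)) * cutf (√(t^2 + ‖w‖^2)) := by
    rw [Measure.volume_eq_prod, integral_prod]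
    refine bdd_integrable (s := Icc (-1) 1 ×ˢ closedBall 0 1) ?_ ?_ C ?_ ?_
    · exact Measurable.mul (hF.measurable.comp (by fun_prop)) (measurable_cutf.comp (by fun_prop))
    · rw [Measure.prod_prod]
      exact ENNReal.mul_lt_top (by simp) measure_closedBall_lt_top
    · intro p
      rw [norm_mul]
      have : ‖cutf (√(p.1^2 + ‖p.2‖^2))‖ ≤ 1 := by unfold cutf; split_ifs <;> simp
      calc _ ≤ C * 1 := mul_le_mul (hC _) this (norm_nonneg _) ((abs_nonneg _).trans (hC 0))
        _ = C := mul_one C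
    · intro p hp
      have : ¬ √(p.1^2+‖p.2‖^2) < 1 := by
        intro h; apply hp
        have : p.1^2+‖p.2‖^2 < 1 := by
          rw [Real.sqrt_lt' one_pos] at h; simpa using h
        refine ⟨abs_le.1 ?_, ?_⟩
        · rw [abs_le_one_iff_mul_self_le_one]; nlinarith [sq_nonneg ‖p.2‖]
        · rw [mem_closedBall_zero_iff, ← abs_of_nonneg (norm_nonneg p.2), abs_le_one_iff_mul_self_le_one]
          nlinarith [sq_nonneg p.1]
      simp [cutf, this]
  rw [e4]
  have e5 : ∀ t : ℝ, ∫ w : EuclideanSpace ℝ (Fin (2*m+2)), F (t / √(t^2 + ‖w‖^2)) * cutf (√(t^2 + ‖w‖^2)) =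
     ((2*m+2 : ℕ) * (volume : Measure (EuclideanSpace ℝ (Fin (2*m+2)))).real (ball 0 1)) *
       ∫ q in Ioi (0:ℝ), q ^ (2*m+1) * (F (t / √(t^2+q^2)) * cutf (√(t^2+q^2))) := by
    intro t
    rw [integral_fun_norm_addHaar volume (fun q => F (t / √(t^2 + q^2)) * cutf (√(t^2 + q^2)))]
    rw [finrank_euclideanSpace_fin]
    simp only [nsmul_eq_mul, smul_eq_mul, mul_assoc]
    rfl
  simp_rw [e5]
  rw [integral_const_mul, plane_integral (2*m+1) F hF.measurable C hC, ← hA]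
  have e6 : ∫ α in (0:ℝ)..Real.pi, F (Real.cos α) * Real.sin α ^ (2*m+1) = ∫ s in (-1:ℝ)..1, F s * (1 - s^2)^m := by
    have := intervalIntegral.integral_comp_mul_deriv (a := 0) (b := Real.pi) (f := Real.cos) (f' := fun x => - Real.sin x)
      (g := fun s => F s * (1 - s^2)^m) (fun x _ => Real.hasDerivAt_cos x) (by fun_prop) (by fun_prop)
    rw [Real.cos_zero, Real.cos_pi, intervalIntegral.integral_symm (-1) 1] at this
    rw [← neg_inj, ← this, ← intervalIntegral.integral_neg]
    congr 1; funext α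
    simp only [Function.comp]
    rw [← Real.sin_sq, pow_succ, pow_mul]; ring
  rw [e6]; ring
end slice

end Part2

section Part3
open MeasureTheory Metric Set Measure
section kernel

structure IsBump (φ : ℝ → ℝ) : Prop where
  smooth : ContDiff ℝ (⊤ : ℕ∞) φ
  zero : ∀ k b, 1 ≤ |b| → iteratedDeriv k φ b = 0
  int : ∫ b in (-1:ℝ)..1, φ b = 1

theorem exists_bump : ∃ φ, IsBump φ := by
  let B : ContDiffBump (0:ℝ) := ⟨1/4, 1/2, by norm_num, by norm_num⟩
  let φ := B.normed volume
  have hs : ∀ k, tsupport (iteratedDeriv k φ) ⊆ closedBall 0 (1/2) := by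
    intro k
    induction k with
    | zero => rw [iteratedDeriv_zero, B.tsupport_normed_eq]
    | succ k ih => 
      rw [iteratedDeriv_succ]
      exact (closure_minimal support_deriv_subset (isClosed_tsupport _)).trans ih
  have hz : ∀ k b, 1 ≤ |b| → iteratedDeriv k φ b = 0 := by
    intro k b hb
    refine image_eq_zero_of_notMem_tsupport fun h => ?_
    have := hs k h
    rw [mem_closedBall_zero_iff, Real.norm_eq_abs] at this
    linarith
  refine ⟨φ, ⟨B.contDiff_normed, hz, ?_⟩⟩
  rw [intervalIntegral.integral_eq_integral_of_support_subset]
  · exact B.integral_normed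
  · intro b hb
    have : ¬ 1 ≤ |b| := fun h => hb (by simpa using hz 0 b h)
    have := abs_lt.1 (not_le.1 this)
    exact ⟨this.1, this.2.le⟩

theorem IsBump.cont {φ : ℝ → ℝ} (h : IsBump φ) (k : ℕ) : Continuous (iteratedDeriv k φ) :=
  h.smooth.continuous_iteratedDeriv k (by exact_mod_cast le_top)

theorem IsBump.supp {φ : ℝ → ℝ} (h : IsBump φ) (k : ℕ) : Function.support (iteratedDeriv k φ) ⊆ Ioo (-1) 1 := by
  intro b hb
  have : ¬ 1 ≤ |b| := fun h' => hb (h.zero k b h')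
  exact abs_lt.1 (not_le.1 this)

theorem IsBump.bdd {φ : ℝ → ℝ} (h : IsBump φ) (k : ℕ) : ∃ C, 0 < C ∧ ∀ b, |iteratedDeriv k φ b| ≤ C := by
  obtain ⟨C, hC⟩ := (isCompact_Icc (a := (-1:ℝ)) (b := 1)).exists_bound_of_continuousOn (h.cont k).continuousOn
  refine ⟨max C 1, by positivity, fun b => ?_⟩
  by_cases hb : 1 ≤ |b|
  · rw [h.zero k b hb]; simp
  · exact (hC b (abs_le.1 (not_le.1 hb).le)).trans (le_max_left _ _)

theorem IsBump.hasDerivAt {φ : ℝ → ℝ} (h : IsBump φ) (k : ℕ) (b : ℝ) :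
    HasDerivAt (iteratedDeriv k φ) (iteratedDeriv (k+1) φ b) b := by
  rw [iteratedDeriv_succ]
  exact ((h.smooth.differentiable_iteratedDeriv k (by exact_mod_cast WithTop.coe_lt_top _)) b).hasDerivAt

theorem IsBump.ibp {φ : ℝ → ℝ} (h : IsBump φ) (k : ℕ) : ∀ (F : ℕ → ℝ → ℝ) (i : ℕ)
    (_ : ∀ j, ContinuousOn (F j) (Icc (-1) 1))
    (_ : ∀ j, ∀ b ∈ Icc (-1:ℝ) 1, HasDerivAt (F j) (F (j+1) b) b),
    ∫ b in (-1:ℝ)..1, F k b * iteratedDeriv i φ b = (-1)^k * ∫ b in (-1:ℝ)..1, F 0 b * iteratedDeriv (i+k) φ b := by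
  induction k with
  | zero => intro F i _ _; simp
  | succ k ih =>
    intro F i hc hd
    have e1 := ih (fun j => F (j+1)) i (fun j => hc (j+1)) (fun j => hd (j+1))
    rw [e1]
    have hu : uIcc (-1:ℝ) 1 = Icc (-1) 1 := uIcc_of_le (by norm_num)
    have := intervalIntegral.integral_mul_deriv_eq_deriv_mul (a := -1) (b := 1) (u := F 0) (u' := F 1)
      (v := iteratedDeriv (i+k) φ) (v' := iteratedDeriv (i+k+1) φ) (by rw [hu]; exact hd 0)
      (fun x _ => h.hasDerivAt _ x) (ContinuousOn.intervalIntegrable (by rw [hu]; exact hc 1))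
      ((h.cont _).intervalIntegrable _ _)
    rw [h.zero _ 1 (by simp), h.zero _ (-1) (by simp)] at this
    rw [show i + (k+1) = i+k+1 by ring, this]
    simp only [zero_add]
    ring

theorem poly_der (m : ℕ) (p : Polynomial ℝ) (hp : p.natDegree ≤ 2) :
    Polynomial.derivative^[2*m] (p^m) = Polynomial.C ((2*m).factorial * p.coeff 2 ^ m) := by
  have h1 : (p^m).natDegree ≤ 2*m := (Polynomial.natDegree_pow_le_of_le m hp).trans (by omega)
  have h2 : (Polynomial.derivative^[2*m] (p^m)).natDegree ≤ 0 :=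
    (Polynomial.natDegree_iterate_derivative _ _).trans (by omega)
  rw [Polynomial.eq_C_of_natDegree_le_zero h2, Polynomial.coeff_iterate_derivative]
  simp only [zero_add, Nat.descFactorial_self, nsmul_eq_mul]
  rw [mul_comm 2 m, Polynomial.coeff_pow_of_natDegree_le hp]

/-- the constant -/
noncomputable def cc (m : ℕ) : ℝ :=
  ((2*m+2 : ℕ) * (volume : Measure (EuclideanSpace ℝ (Fin (2*m+2)))).real (ball 0 1))

theorem kernel_eq {φ : ℝ → ℝ} (h : IsBump φ) (m : ℕ) (v : EE (2*m+3)) (b ε : ℝ) (hv : v ≠ 0) (hε : 0 < ε)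
    (hb : |b| + ε ≤ 2 * ‖v‖) :
    ∫ θ : sphere (0 : EE (2*m+3)) 1, iteratedDeriv (2*m) φ ((b + 2 * inner ℝ (θ : EE (2*m+3)) v) / ε)
      ∂((volume : Measure (EE (2*m+3))).toSphere) =
    cc m * ((-1)^m * (2*m).factorial * (ε / (2 * ‖v‖)) ^ (2*m+1)) := by
  have hR : 0 < ‖v‖ := norm_pos_iff.2 hv
  obtain ⟨C, -, hC⟩ := h.bdd (2*m)
  set l := 2 * ‖v‖ / ε with hl
  have hlpos : 0 < l := by positivity
  set d := b / ε with hd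
  have hs := slice m (fun s => iteratedDeriv (2*m) φ (l * s + d)) ((h.cont _).comp (by fun_prop)) C (fun s => hC _)
    (‖v‖⁻¹ • v) (by rw [norm_smul, norm_inv, norm_norm, inv_mul_cancel₀ hR.ne'])
  have e1 : ∀ θ : sphere (0 : EE (2*m+3)) 1, iteratedDeriv (2*m) φ ((b + 2 * inner ℝ (θ : EE (2*m+3)) v) / ε)
     = iteratedDeriv (2*m) φ (l * (inner ℝ (θ : EE (2*m+3)) (‖v‖⁻¹ • v)) + d) := by
    intro θ
    congr 1
    rw [inner_smul_right, hl, hd]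
    field_simp
    ring
  simp_rw [e1]
  rw [hs]
  unfold cc
  congr 1
  set f : ℝ → ℝ := fun a => iteratedDeriv (2*m) φ a * (1 - ((a - d)/l)^2)^m with hf
  have e2 : ∫ s in (-1:ℝ)..1, iteratedDeriv (2*m) φ (l * s + d) * (1 - s^2)^m = ∫ s in (-1:ℝ)..1, f (l * s + d) := by
    congr 1; funext s
    simp only [hf]
    rw [show (l * s + d - d) / l = s by field_simp; ring]
  have hsup : ∀ a c : ℝ, a ≤ -1 → 1 ≤ c → ∫ x in a..c, f x = ∫ x, f x := by
    intro a c ha hc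
    refine intervalIntegral.integral_eq_integral_of_support_subset fun x hx => ?_
    have := h.supp (2*m) (show x ∈ Function.support (iteratedDeriv (2*m) φ) from fun h0 => hx (by simp [hf, h0]))
    exact ⟨by linarith [this.1], by linarith [this.2]⟩
  have hb1 : |d| + 1 ≤ l := by
    rw [hd, hl, abs_div, abs_of_pos hε, ← div_self hε.ne', ← add_div]
    gcongr
  rw [e2, intervalIntegral.integral_comp_mul_add f hlpos.ne' d,
    hsup _ _ (by linarith [le_abs_self d]) (by linarith [neg_abs_le d]), ← hsup (-1) 1 le_rfl le_rfl]
  set p : Polynomial ℝ := Polynomial.C (-(1/l)^2) * Polynomial.X^2 + Polynomial.C (2*d/l^2) * Polynomial.X + Polynomial.C (1 - (d/l)^2) with hp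
  have hpe : ∀ a, p.eval a = 1 - ((a - d)/l)^2 := by
    intro a
    simp only [hp, Polynomial.eval_add, Polynomial.eval_mul, Polynomial.eval_C, Polynomial.eval_pow, Polynomial.eval_X]
    field_simp; ring
  have hpc : p.coeff 2 = -(1/l)^2 := by
    rw [hp]; simp only [Polynomial.coeff_add, Polynomial.coeff_C_mul, Polynomial.coeff_X_pow, Polynomial.coeff_X, Polynomial.coeff_C]; norm_num
  have key := h.ibp (2*m) (fun j a => (Polynomial.derivative^[j] (p^m)).eval a) 0
    (fun j => Polynomial.continuousOn _)
    (fun j b _ => by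
      rw [Function.iterate_succ_apply']
      exact Polynomial.hasDerivAt _ _)
  rw [poly_der m p Polynomial.natDegree_quadratic_le] at key
  simp only [Polynomial.eval_C, iteratedDeriv_zero, Function.iterate_zero, id, zero_add, Polynomial.eval_pow, hpe] at key
  rw [intervalIntegral.integral_const_mul, h.int] at key
  have : ∫ x in (-1:ℝ)..1, f x = (2*m).factorial * (p.coeff 2)^m := by
    rw [← mul_one (_ * _), key]
    simp only [pow_mul, neg_one_sq, one_pow, one_mul, hf]
    congr 1; funext x; ring
  rw [this, hpc, smul_eq_mul, show ε / (2 * ‖v‖) = 1/l by rw [hl, one_div_div], neg_pow, ← pow_mul, pow_succ]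
  simp only [one_div]
  ring

end kernel

end Part3

section Part4
open MeasureTheory Metric Set Measure
section newton

theorem loc_integrable (N a : ℕ) (ha : a ≤ N) (R : ℝ) :
    IntegrableOn (fun z : EE (N+1) => (‖z‖^a)⁻¹) (ball 0 R) := by
  rw [integrableOn_fun_norm_addHaar volume (f := fun r => (r^a)⁻¹)]
  have : IntegrableOn (fun r : ℝ => r^(N-a)) (Ioo 0 R) := by
    exact (Continuous.integrableOn_Icc (by fun_prop)).mono_set Ioo_subset_Icc_self
  refine this.congr_fun (fun r hr => ?_) measurableSet_Ioo
  have : r ≠ 0 := hr.1.ne'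
  simp only [finrank_euclideanSpace_fin, Nat.add_sub_cancel, smul_eq_mul]
  rw [pow_sub₀ _ this ha]

theorem sing_integrable (N a : ℕ) (ha : a ≤ N) (x : EE (N+1)) (g : EE (N+1) → ℝ) (hg : Continuous g)
    (hc : HasCompactSupport g) : Integrable (fun y => (‖y - x‖^a)⁻¹ * g y) := by
  have h1 : Integrable (fun z : EE (N+1) => (‖z‖^a)⁻¹ * g (z + x)) := by
    have hc' : HasCompactSupport (fun z => g (z + x)) := hc.comp_homeomorph (Homeomorph.addRight x)
    obtain ⟨R, hR⟩ := hc'.isCompact.isBounded.subset_ball 0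
    obtain ⟨C, hC⟩ := hc.exists_bound_of_continuous hg
    have : IntegrableOn (fun z : EE (N+1) => (‖z‖^a)⁻¹ * g (z + x)) (ball 0 R) :=
      Integrable.mul_bdd (c := C) (loc_integrable N a ha R) (Continuous.aestronglyMeasurable (by fun_prop)) (.of_forall fun z => hC _)
    refine (integrableOn_iff_integrable_of_support_subset fun z hz => ?_).1 this
    apply hR
    apply subset_tsupport
    intro h0; apply hz; simp only at h0; simp [h0]
  simpa using h1.comp_sub_right x

theorem lap_eq {n : ℕ} {f : EE n → ℝ} (hf : ContDiff ℝ (⊤ : ℕ∞) f) (y : EE n) :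
    lap f y = ∑ i : Fin n, fderiv ℝ (fun y => fderiv ℝ f y (EuclideanSpace.single i 1)) y (EuclideanSpace.single i 1) := by
  unfold lap
  refine Finset.sum_congr rfl fun i _ => ?_
  rw [iteratedFDeriv_two_apply]
  have hd : Differentiable ℝ (fderiv ℝ f) := (hf.fderiv_right (m := (⊤ : ℕ∞)) (by simp)).differentiable (by simp)
  rw [fderiv_clm_apply (hd y) (by fun_prop)]
  simp

theorem lap_smooth {n : ℕ} {f : EE n → ℝ} (hf : ContDiff ℝ (⊤ : ℕ∞) f) : ContDiff ℝ (⊤ : ℕ∞) (lap f) := by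
  have : lap f = fun y => ∑ i : Fin n, fderiv ℝ (fun y => fderiv ℝ f y (EuclideanSpace.single i 1)) y (EuclideanSpace.single i 1) :=
    funext fun y => lap_eq hf y
  rw [this]
  have hd : ContDiff ℝ (⊤ : ℕ∞) (fderiv ℝ f) := hf.fderiv_right (by simp)
  refine ContDiff.sum fun i _ => ?_
  have : ContDiff ℝ (⊤ : ℕ∞) (fun y => fderiv ℝ f y (EuclideanSpace.single i 1)) := hd.clm_apply contDiff_const
  exact (this.fderiv_right (m := (⊤ : ℕ∞)) (by simp)).clm_apply contDiff_const

theorem lap_supp {n : ℕ} {f : EE n → ℝ} : Function.support (lap f) ⊆ tsupport f := by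
  intro y hy
  by_contra h
  apply hy
  unfold lap
  refine Finset.sum_eq_zero fun i _ => ?_
  have : y ∉ tsupport (iteratedFDeriv ℝ 2 f) := fun h' => h (tsupport_iteratedFDeriv_subset 2 h')
  rw [image_eq_zero_of_notMem_tsupport this]
  rfl

theorem lap_compact {n : ℕ} {f : EE n → ℝ} (hc : HasCompactSupport f) : HasCompactSupport (lap f) :=
  hc.mono' lap_supp

/-- regularized identity -/
theorem newton_reg (N : ℕ) {f : EE (N+2) → ℝ} (hf : ContDiff ℝ (⊤ : ℕ∞) f) (hc : HasCompactSupport f)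
    (x : EE (N+2)) (η : ℝ) (hη : 0 < η) :
    ∫ y, (‖y - x‖^2 + η) ^ (-(N/2:ℝ)) * lap f y =
      N * ∫ y, (‖y - x‖^2 + η) ^ (-((N+2:ℕ)/2:ℝ)) * fderiv ℝ f y (y - x) := by
  have hw : ∀ y : EE (N+2), 0 < ‖y - x‖^2 + η := fun y => by positivity
  have hcont : ∀ p : ℝ, Continuous (fun y : EE (N+2) => (‖y - x‖^2 + η) ^ p) := fun p =>
    Continuous.rpow_const (by fun_prop) (fun y => Or.inl (hw y).ne')
  have hu : ∀ y, HasFDerivAt (fun y : EE (N+2) => (‖y - x‖^2 + η) ^ (-(N/2:ℝ)))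
      ((-(N:ℝ) * (‖y - x‖^2 + η) ^ (-((N+2:ℕ)/2:ℝ))) • innerSL ℝ (y - x)) y := by
    intro y
    have h1 : HasFDerivAt (fun y : EE (N+2) => ‖y - x‖^2 + η) (2 • innerSL ℝ (y - x)) y := by
      have := ((hasFDerivAt_id (𝕜 := ℝ) y).sub_const x).norm_sq
      simpa using this.add_const η
    have h2 := (Real.hasDerivAt_rpow_const (x := ‖y - x‖^2 + η) (p := -(N/2:ℝ)) (Or.inl (hw y).ne')).comp_hasFDerivAt y h1
    refine HasFDerivAt.congr_fderiv h2 ?_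
    ext v
    simp only [_root_.smul_apply, smul_eq_mul, nsmul_eq_mul]
    rw [show -(N/2:ℝ) - 1 = -((N+2:ℕ)/2:ℝ) by push_cast; ring]
    push_cast
    ring
  have hdf : ContDiff ℝ (⊤ : ℕ∞) (fderiv ℝ f) := hf.fderiv_right (by simp)
  have hcf : HasCompactSupport (fderiv ℝ f) := hc.fderiv ℝ
  set e : Fin (N+2) → EE (N+2) := fun i => EuclideanSpace.single i 1 with he
  set g : Fin (N+2) → EE (N+2) → ℝ := fun i y => fderiv ℝ f y (e i) with hg
  have hgs : ∀ i, ContDiff ℝ (⊤ : ℕ∞) (g i) := fun i => hdf.clm_apply contDiff_const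
  have hgc : ∀ i, HasCompactSupport (g i) := fun i => hcf.mono (fun y hy h0 => hy (by
    simp only [hg]; rw [h0]; rfl))
  have hgd : ∀ i, Continuous (fun y => fderiv ℝ (g i) y (e i)) := fun i =>
    (((hgs i).fderiv_right (m := (⊤ : ℕ∞)) (by simp)).clm_apply contDiff_const).continuous
  have hgdc : ∀ i, HasCompactSupport (fun y => fderiv ℝ (g i) y (e i)) := fun i => ((hgc i).fderiv ℝ).mono (fun y hy h0 => hy (by
    simp only; rw [h0]; rfl))
  have hint1 : ∀ i, Integrable (fun y => (‖y - x‖^2 + η) ^ (-(N/2:ℝ)) * fderiv ℝ (g i) y (e i)) := fun i =>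
    ((hcont _).mul (hgd i)).integrable_of_hasCompactSupport (hgdc i).mul_left
  have hfd : ∀ i, (fun y => fderiv ℝ (fun y : EE (N+2) => (‖y - x‖^2 + η) ^ (-(N/2:ℝ))) y (e i) * g i y) =
     fun y => -(N * ((‖y - x‖^2 + η) ^ (-((N+2:ℕ)/2:ℝ)) * ((y - x) i * g i y))) := by
    intro i; funext y
    rw [(hu y).fderiv]
    simp only [_root_.smul_apply, smul_eq_mul, innerSL_apply_apply, he, EuclideanSpace.inner_single_right]
    simp
    ring
  have hint2 : ∀ i, Integrable (fun y => (‖y - x‖^2 + η) ^ (-((N+2:ℕ)/2:ℝ)) * ((y - x) i * g i y)) := fun i =>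
    ((hcont _).mul (Continuous.mul (by fun_prop) (hgs i).continuous)).integrable_of_hasCompactSupport
      (hgc i).mul_left.mul_left
  have key : ∀ i, ∫ y, (‖y - x‖^2 + η) ^ (-(N/2:ℝ)) * fderiv ℝ (g i) y (e i) =
     N * ∫ y, (‖y - x‖^2 + η) ^ (-((N+2:ℕ)/2:ℝ)) * ((y - x) i * g i y) := by
    intro i
    rw [integral_mul_fderiv_eq_neg_fderiv_mul_of_integrable, hfd i, integral_neg, neg_neg, integral_const_mul]
    · rw [hfd i]; exact ((hint2 i).const_mul _).neg
    · exact hint1 i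
    · exact ((hcont _).mul (hgs i).continuous).integrable_of_hasCompactSupport (hgc i).mul_left
    · exact fun y _ => (hu y).differentiableAt
    · exact fun y _ => ((hgs i).differentiable (by simp)) y
  simp_rw [lap_eq hf, Finset.mul_sum]
  rw [integral_finsetSum _ (fun i _ => hint1 i)]
  rw [Finset.sum_congr rfl (fun i _ => key i), ← Finset.mul_sum, ← integral_finsetSum _ (fun i _ => hint2 i)]
  congr 2; funext y
  rw [← Finset.mul_sum]
  congr 1
  have : y - x = ∑ i, (y - x) i • e i := by
    have := (EuclideanSpace.basisFun (Fin (N+2)) ℝ).sum_repr (y - x)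
    simpa [he] using this.symm
  conv_rhs => rw [this]
  simp [hg]
end newton

end Part4

section Part5
open MeasureTheory Metric Set Measure Filter Topology
section newton2

theorem sq_rpow (r : ℝ) (hr : 0 < r) (N : ℕ) : (r^2) ^ (-(N/2:ℝ)) = (r^N)⁻¹ := by
  rw [Real.rpow_neg (by positivity), ← Real.rpow_natCast_mul hr.le]
  congr 1
  rw [← Real.rpow_natCast]; congr 1; push_cast; ring

theorem reg_le (r η : ℝ) (hr : 0 < r) (hη : 0 < η) (N : ℕ) : (r^2 + η) ^ (-(N/2:ℝ)) ≤ (r^N)⁻¹ := by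
  rw [← sq_rpow r hr]
  exact Real.rpow_le_rpow_of_nonpos (by positivity) (by linarith) (by simp; positivity)

theorem reg_tendsto (r : ℝ) (hr : 0 < r) (N : ℕ) :
    Tendsto (fun η : ℝ => (r^2 + η) ^ (-(N/2:ℝ))) (𝓝[>] 0) (𝓝 (r^N)⁻¹) := by
  rw [← sq_rpow r hr]
  have : ContinuousAt (fun η : ℝ => (r^2 + η) ^ (-(N/2:ℝ))) 0 :=
    ContinuousAt.rpow_const (by fun_prop) (Or.inl (by simp; positivity))
  have h := this.tendsto
  simp only [add_zero] at h
  exact h.mono_left nhdsWithin_le_nhds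

theorem reg_limit (n a : ℕ) (ha : a ≤ n) (x : EE (n+1)) (b : ℕ) (g : EE (n+1) → ℝ) (hg : Continuous g)
    (G : EE (n+1) → ℝ) (hG : Continuous G) (hc : HasCompactSupport G)
    (hle : ∀ y, y ≠ x → (‖y - x‖^b)⁻¹ * |g y| ≤ (‖y - x‖^a)⁻¹ * G y) :
    Tendsto (fun η : ℝ => ∫ y, (‖y - x‖^2 + η) ^ (-(b/2:ℝ)) * g y) (𝓝[>] 0)
      (𝓝 (∫ y, (‖y - x‖^b)⁻¹ * g y)) := by
  have hae : ∀ᵐ y : EE (n+1), y ≠ x := by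
    simp [ae_iff]
  refine tendsto_integral_filter_of_dominated_convergence (fun y => (‖y - x‖^a)⁻¹ * G y) ?_ ?_
    (sing_integrable n a ha x G hG hc) ?_
  · filter_upwards [self_mem_nhdsWithin] with η hη
    have hη : 0 < η := hη
    refine Continuous.aestronglyMeasurable (Continuous.mul (Continuous.rpow_const (by fun_prop) (fun y => Or.inl ?_)) hg)
    positivity
  · filter_upwards [self_mem_nhdsWithin] with η hη
    have hη : 0 < η := hη
    filter_upwards [hae] with y hy
    refine le_trans ?_ (hle y hy)
    rw [norm_mul, Real.norm_eq_abs, Real.norm_eq_abs, abs_of_nonneg (by positivity)]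
    gcongr
    exact reg_le _ η (norm_pos_iff.2 (sub_ne_zero.2 hy)) hη b
  · filter_upwards [hae] with y hy
    exact (reg_tendsto _ (norm_pos_iff.2 (sub_ne_zero.2 hy)) b).mul_const _

theorem radial (N : ℕ) {f : EE (N+2) → ℝ} (hf : ContDiff ℝ (⊤ : ℕ∞) f) (hc : HasCompactSupport f)
    (x : EE (N+2)) : ∫ y, (‖y - x‖^(N+2))⁻¹ * fderiv ℝ f y (y - x) =
      - ((volume : Measure (EE (N+2))).toSphere.real univ * f x) := by
  have hdf : ContDiff ℝ (⊤ : ℕ∞) (fderiv ℝ f) := hf.fderiv_right (by simp)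
  have hcf : HasCompactSupport (fderiv ℝ f) := hc.fderiv ℝ
  have hint0 : Integrable (fun y => (‖y - x‖^(N+2))⁻¹ * fderiv ℝ f y (y - x)) := by
    have h1 := sing_integrable (N+1) (N+1) le_rfl x (fun y => ‖fderiv ℝ f y‖) hdf.continuous.norm hcf.norm
    refine h1.mono' ?_ (.of_forall fun y => ?_)
    · refine Measurable.aestronglyMeasurable (Measurable.mul (by fun_prop) (Continuous.measurable ?_))
      exact hdf.continuous.clm_apply (by fun_prop)
    · rw [norm_mul, norm_inv, norm_pow, norm_norm]
      by_cases h : ‖y - x‖ = 0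
      · simp [h]
      calc (‖y-x‖^(N+2))⁻¹ * ‖fderiv ℝ f y (y-x)‖ ≤ (‖y-x‖^(N+2))⁻¹ * (‖fderiv ℝ f y‖ * ‖y-x‖) := by
            gcongr; exact ContinuousLinearMap.le_opNorm _ _
        _ = _ := by field_simp; ring
  have hint : Integrable (fun z => (‖z‖^(N+2))⁻¹ * fderiv ℝ f (z + x) z) := by
    simpa using hint0.comp_add_right x
  have e0 : ∫ y, (‖y - x‖^(N+2))⁻¹ * fderiv ℝ f y (y - x) = ∫ z, (‖z‖^(N+2))⁻¹ * fderiv ℝ f (z + x) z := by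
    rw [← integral_add_right_eq_self _ x]; simp
  rw [e0, polar1 volume hint]
  have e1 : ∀ θ : sphere (0 : EE (N+2)) 1, ∫ r in Ioi (0:ℝ), r ^ (Module.finrank ℝ (EE (N+2)) - 1) *
     ((‖r • (θ : EE (N+2))‖^(N+2))⁻¹ * fderiv ℝ f (r • (θ : EE (N+2)) + x) (r • (θ : EE (N+2)))) = - f x := by
    intro θ
    set φ : ℝ → ℝ := fun r => f (r • (θ : EE (N+2)) + x) with hφ
    have hn : ‖(θ:EE (N+2))‖ = 1 := by simp
    have hφs : ContDiff ℝ (⊤ : ℕ∞) φ := hf.comp (by fun_prop)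
    have hφc : HasCompactSupport φ := by
      obtain ⟨R, hR⟩ := hc.isCompact.isBounded.subset_closedBall 0
      refine HasCompactSupport.intro (isCompact_Icc (a := -(R+‖x‖)) (b := R + ‖x‖)) fun r hr => ?_
      change f (r • (θ : EE (N+2)) + x) = 0
      refine image_eq_zero_of_notMem_tsupport (f := f) fun h => hr ?_
      have := hR h
      rw [mem_closedBall_zero_iff] at this
      apply abs_le.1
      have h2 : ‖r • (θ : EE (N+2))‖ ≤ ‖r • (θ : EE (N+2)) + x‖ + ‖x‖ := by
        simpa using norm_sub_le (r • (θ : EE (N+2)) + x) x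
      rw [norm_smul, hn, mul_one] at h2
      exact h2.trans (by linarith)
    have hd : ∀ r, deriv φ r = fderiv ℝ f (r • (θ : EE (N+2)) + x) θ := by
      intro r
      have h1 : HasDerivAt (fun r : ℝ => r • (θ : EE (N+2)) + x) (θ : EE (N+2)) r := by
        simpa using ((hasDerivAt_id r).smul_const (θ : EE (N+2))).add_const x
      exact (((hf.differentiable (by simp)) _).hasFDerivAt.comp_hasDerivAt r h1).deriv
    have := hφc.integral_Ioi_deriv_eq (hφs.of_le (by exact_mod_cast le_top)) 0
    simp only [hφ, zero_smul, zero_add] at this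
    rw [← this]
    refine setIntegral_congr_fun measurableSet_Ioi fun r hr => ?_
    have hr : 0 < r := hr
    change _ = deriv φ r
    simp only [hd, norm_smul, hn, mul_one, map_smul, smul_eq_mul, Real.norm_eq_abs, abs_of_pos hr, finrank_euclideanSpace_fin]
    rw [show N + 2 - 1 = N+1 by omega]
    field_simp; ring
  simp_rw [e1]
  rw [integral_const, smul_eq_mul]; ring

theorem newton (N : ℕ) {f : EE (N+2) → ℝ} (hf : ContDiff ℝ (⊤ : ℕ∞) f) (hc : HasCompactSupport f)
    (x : EE (N+2)) :
    ∫ y, (‖y - x‖^N)⁻¹ * lap f y = - (N * (volume : Measure (EE (N+2))).toSphere.real univ * f x) := by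
  have hdf : ContDiff ℝ (⊤ : ℕ∞) (fderiv ℝ f) := hf.fderiv_right (by simp)
  have hcf : HasCompactSupport (fderiv ℝ f) := hc.fderiv ℝ
  have l1 := reg_limit (N+1) N (by omega) x N (lap f) (lap_smooth hf).continuous (fun y => |lap f y|)
    (lap_smooth hf).continuous.abs (lap_compact hc).norm (fun y _ => le_rfl)
  have l2 := reg_limit (N+1) (N+1) le_rfl x (N+2) (fun y => fderiv ℝ f y (y - x))
    (hdf.continuous.clm_apply (by fun_prop)) (fun y => ‖fderiv ℝ f y‖) hdf.continuous.norm hcf.norm (by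
      intro y hy
      have : ‖y - x‖ ≠ 0 := norm_ne_zero_iff.2 (sub_ne_zero.2 hy)
      calc (‖y-x‖^(N+2))⁻¹ * |fderiv ℝ f y (y-x)| ≤ (‖y-x‖^(N+2))⁻¹ * (‖fderiv ℝ f y‖ * ‖y-x‖) := by
            gcongr; exact (fderiv ℝ f y).le_opNorm (y - x)
        _ = _ := by field_simp; ring)
  have l3 := (l2.const_mul (N:ℝ)).congr' (by
    filter_upwards [self_mem_nhdsWithin] with η hη
    exact (newton_reg N hf hc x η hη).symm)
  have := tendsto_nhds_unique l1 l3
  rw [this, radial N hf hc x]; ring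

end newton2

end Part5

section Part6
open MeasureTheory Metric Set Measure Filter Topology
section param

theorem param_cont {n : ℕ} {X V : Type} [NormedAddCommGroup X] [NormedSpace ℝ X] [FiniteDimensional ℝ X]
    [NormedAddCommGroup V] [NormedSpace ℝ V] (μ : Measure (sphere (0 : EE n) 1)) [IsFiniteMeasure μ]
    {F : X × EE n → V} (hF : Continuous F) :
    Continuous (fun p : X => ∫ σ : sphere (0 : EE n) 1, F (p, σ) ∂μ) := by
  have : ProperSpace X := FiniteDimensional.proper ℝ X
  have h := continuous_parametric_integral_of_continuous (μ := μ)
    (f := fun (p : X) (σ : sphere (0 : EE n) 1) => F (p, σ)) (by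
      change Continuous fun q : X × sphere (0 : EE n) 1 => F (q.1, q.2)
      fun_prop) (s := univ) isCompact_univ
  simpa using h

theorem param_smooth {n : ℕ} {X : Type} [NormedAddCommGroup X] [NormedSpace ℝ X] [FiniteDimensional ℝ X]
    (μ : Measure (sphere (0 : EE n) 1)) [IsFiniteMeasure μ] (k : ℕ) :
    ∀ (V : Type) [NormedAddCommGroup V] [NormedSpace ℝ V] [CompleteSpace V]
    (F : X × EE n → V) (_ : ContDiff ℝ (⊤ : ℕ∞) F),
    ContDiff ℝ k (fun p : X => ∫ σ : sphere (0 : EE n) 1, F (p, σ) ∂μ) := by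
  have : ProperSpace X := FiniteDimensional.proper ℝ X
  induction k with
  | zero =>
    intro V _ _ _ F hF
    simp only [Nat.cast_zero]
    rw [contDiff_zero]
    exact param_cont μ hF.continuous
  | succ k ih =>
    intro V _ _ _ F hF
    push_cast
    rw [contDiff_succ_iff_hasFDerivAt]
    have hdf : ContDiff ℝ (⊤ : ℕ∞) (fderiv ℝ F) := hF.fderiv_right (by simp)
    set F' : X × EE n → (X →L[ℝ] V) := fun q => (fderiv ℝ F q).comp (ContinuousLinearMap.inl ℝ X (EE n)) with hF'
    have hF's : ContDiff ℝ (⊤ : ℕ∞) F' := hdf.clm_comp contDiff_const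
    refine ⟨_, ih (X →L[ℝ] V) F' hF's, fun p => ?_⟩
    obtain ⟨C, hC⟩ := ((isCompact_closedBall p 1).prod (isCompact_sphere (0 : EE n) 1)).exists_bound_of_continuousOn
      hF's.continuous.continuousOn
    have hmeas : ∀ {W : Type} [NormedAddCommGroup W] [NormedSpace ℝ W] (G : X × EE n → W) (_ : Continuous G) (q : X),
        AEStronglyMeasurable (fun σ : sphere (0 : EE n) 1 => G (q, σ)) μ := by
      intro W _ _ G hG q
      exact Continuous.aestronglyMeasurable (by fun_prop)
    refine hasFDerivAt_integral_of_dominated_of_fderiv_le (s := closedBall p 1) (bound := fun _ => C)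
      (F := fun q (σ : sphere (0 : EE n) 1) => F (q, σ)) (F' := fun q (σ : sphere (0 : EE n) 1) => F' (q, σ))
      (closedBall_mem_nhds p one_pos) (.of_forall fun q => hmeas F hF.continuous q) ?_ (hmeas F' hF's.continuous p)
      (.of_forall fun σ q hq => hC (q, σ) ⟨hq, σ.2⟩) (integrable_const C) (.of_forall fun σ q hq => ?_)
    · obtain ⟨C', hC'⟩ := ((isCompact_singleton (x := p)).prod (isCompact_sphere (0 : EE n) 1)).exists_bound_of_continuousOn
        hF.continuous.continuousOn
      exact Integrable.of_bound (hmeas F hF.continuous p) C' (.of_forall fun σ => hC' (p, σ) ⟨rfl, σ.2⟩)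
    · have h1 : HasFDerivAt (fun q : X => (q, (σ : EE n))) (ContinuousLinearMap.inl ℝ X (EE n)) q :=
        hasFDerivAt_prodMk_left q _
      exact (hF.differentiable (by simp) (q, (σ: EE n))).hasFDerivAt.comp q h1

theorem param_smooth' {n : ℕ} {X : Type} [NormedAddCommGroup X] [NormedSpace ℝ X] [FiniteDimensional ℝ X]
    (μ : Measure (sphere (0 : EE n) 1)) [IsFiniteMeasure μ]
    (F : X × EE n → ℝ) (hF : ContDiff ℝ (⊤ : ℕ∞) F) :
    ContDiff ℝ (⊤ : ℕ∞) (fun p : X => ∫ σ : sphere (0 : EE n) 1, F (p, σ) ∂μ) := by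
  rw [contDiff_infty]
  exact fun k => param_smooth μ k ℝ F hF

variable {E : Type} [NormedAddCommGroup E] [NormedSpace ℝ E]

theorem dop_fderiv {W : E → ℝ → ℝ} 
    (hW : ContDiffOn ℝ (⊤ : ℕ∞) (fun p : E × ℝ => W p.1 p.2) (univ ×ˢ Ioi 0)) (θ : E) (t : ℝ) (ht : 0 < t) :
    HasDerivAt (W θ) (fderiv ℝ (fun p : E × ℝ => W p.1 p.2) (θ, t) (0, 1)) t := by
  have ho : IsOpen ((univ : Set E) ×ˢ Ioi (0:ℝ)) := isOpen_univ.prod isOpen_Ioi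
  have h1 : HasDerivAt (fun t : ℝ => (θ, t)) ((0 : E), (1:ℝ)) t := (hasDerivAt_const t θ).prodMk (hasDerivAt_id t)
  have h2 := ((hW.differentiableOn (by simp)).differentiableAt (ho.mem_nhds (show (θ, t) ∈ _ from ⟨mem_univ _, ht⟩))).hasFDerivAt
  exact h2.comp_hasDerivAt t h1

theorem dop_smooth {W : E → ℝ → ℝ} 
    (hW : ContDiffOn ℝ (⊤ : ℕ∞) (fun p : E × ℝ => W p.1 p.2) (univ ×ˢ Ioi 0)) :
    ContDiffOn ℝ (⊤ : ℕ∞) (fun p : E × ℝ => Dop (W p.1) p.2) (univ ×ˢ Ioi 0) := by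
  have ho : IsOpen ((univ : Set E) ×ˢ Ioi (0:ℝ)) := isOpen_univ.prod isOpen_Ioi
  have h1 : ContDiffOn ℝ (⊤ : ℕ∞) (fun p : E × ℝ => (1 / (2 * p.2)) * fderiv ℝ (fun p : E × ℝ => W p.1 p.2) p (0, 1)) (univ ×ˢ Ioi 0) := by
    refine ContDiffOn.mul (ContDiffOn.div contDiffOn_const (by fun_prop) ?_) 
      ((hW.fderiv_of_isOpen ho (by simp)).clm_apply contDiffOn_const)
    rintro ⟨a, b⟩ ⟨-, hb⟩
    have : 0 < b := hb
    simp [this.ne']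
  refine h1.congr ?_
  rintro ⟨a, b⟩ ⟨-, hb⟩
  simp only [Dop]
  rw [(dop_fderiv hW a b hb).deriv]

theorem dop_iter_smooth {W : E → ℝ → ℝ} 
    (hW : ContDiffOn ℝ (⊤ : ℕ∞) (fun p : E × ℝ => W p.1 p.2) (univ ×ˢ Ioi 0)) (j : ℕ) :
    ContDiffOn ℝ (⊤ : ℕ∞) (fun p : E × ℝ => Dop^[j] (W p.1) p.2) (univ ×ˢ Ioi 0) := by
  induction j with
  | zero => simpa using hW
  | succ j ih =>
    simp only [Function.iterate_succ_apply']
    exact dop_smooth (W := fun a => Dop^[j] (W a)) ih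

theorem dop_iter_deriv {W : E → ℝ → ℝ} 
    (hW : ContDiffOn ℝ (⊤ : ℕ∞) (fun p : E × ℝ => W p.1 p.2) (univ ×ˢ Ioi 0)) (j : ℕ) (θ : E) (t : ℝ) (ht : 0 < t) :
    HasDerivAt (Dop^[j] (W θ)) (2 * t * Dop^[j+1] (W θ) t) t := by
  have h := dop_fderiv (W := fun a => Dop^[j] (W a)) (dop_iter_smooth hW j) θ t ht
  have h2 := h.differentiableAt.hasDerivAt
  refine h2.congr_deriv ?_
  rw [Function.iterate_succ_apply']
  simp only [Dop]
  field_simp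

theorem ibp_theta {W : E → ℝ → ℝ} 
    (hW : ContDiffOn ℝ (⊤ : ℕ∞) (fun p : E × ℝ => W p.1 p.2) (univ ×ˢ Ioi 0)) {φ : ℝ → ℝ} (hφ : IsBump φ) 
    (m : ℕ) (θ : E) (c ε : ℝ) (hε : 0 < ε) (hc : ε < c) :
    ∫ b in (-1:ℝ)..1, Dop^[2*m] (W θ) (√(c + ε * b)) * φ b =
     (ε^(2*m))⁻¹ * ∫ b in (-1:ℝ)..1, W θ (√(c + ε * b)) * iteratedDeriv (2*m) φ b := by
  have hpos : ∀ b ∈ Icc (-1:ℝ) 1, 0 < c + ε * b := by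
    intro b hb
    nlinarith [hb.1]
  have hd : ∀ j : ℕ, ∀ b ∈ Icc (-1:ℝ) 1, HasDerivAt (fun b => ε^j * Dop^[j] (W θ) (√(c + ε * b)))
      (ε^(j+1) * Dop^[j+1] (W θ) (√(c + ε * b))) b := by
    intro j b hb
    have h0 := hpos b hb
    have h1 : HasDerivAt (fun b => c + ε * b) ε b := by
      simpa using ((hasDerivAt_id b).const_mul ε).const_add c
    have h2 := h1.sqrt h0.ne'
    have h3 := ((dop_iter_deriv hW j θ (√(c + ε * b)) (Real.sqrt_pos.2 h0)).comp b h2).const_mul (ε^j)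
    refine h3.congr_deriv ?_
    have := (Real.sqrt_pos.2 h0).ne'
    field_simp
    ring
  have := hφ.ibp (2*m) (fun j b => ε^j * Dop^[j] (W θ) (√(c + ε * b))) 0
    (fun j b hb => (hd j b hb).continuousAt.continuousWithinAt) hd
  simp only [iteratedDeriv_zero, pow_zero, Function.iterate_zero, id, one_mul, zero_add, pow_mul (-1:ℝ) 2, neg_one_sq, one_pow, mul_assoc] at this
  rw [intervalIntegral.integral_const_mul] at this
  rw [← this]
  field_simp

end param

end Part6

section Part7
open MeasureTheory Metric Set Measure Filter Topology
section assembly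

theorem subst_theta (m : ℕ) (g : EE (2*m+3) → ℝ) (hg : Continuous g) (hgc : HasCompactSupport g)
    (Φ : ℝ → ℝ) (hΦ : Continuous Φ) (hz : ∀ b, 1 ≤ |b| → Φ b = 0) (θ : EE (2*m+3)) (c ε : ℝ) (hε : 0 < ε) (hc : ε < c) :
    ∫ b in (-1:ℝ)..1, (√(c + ε * b))^(2*m+1) * 
      (∫ σ : sphere (0 : EE (2*m+3)) 1, g (θ - √(c + ε * b) • (σ : EE (2*m+3))) ∂((volume : Measure (EE (2*m+3))).toSphere)) * Φ b
    = (2/ε) * ∫ y, g y * Φ ((‖y - θ‖^2 - c)/ε) := by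
  set q : ℝ → ℝ := fun r => ∫ σ : sphere (0 : EE (2*m+3)) 1, g (θ - r • (σ : EE (2*m+3))) ∂((volume : Measure (EE (2*m+3))).toSphere) with hq
  have hqc : Continuous q := param_cont (X := ℝ) (volume : Measure (EE (2*m+3))).toSphere 
    (F := fun p : ℝ × EE (2*m+3) => g (θ - p.1 • p.2)) (by fun_prop)
  have e1 : ∫ y, g y * Φ ((‖y - θ‖^2 - c)/ε) = ∫ z, g (θ - z) * Φ ((‖z‖^2 - c)/ε) := by
    rw [← integral_sub_left_eq_self _ volume θ]
    simp
  have hint : Integrable (fun z => g (θ - z) * Φ ((‖z‖^2 - c)/ε)) := by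
    refine Continuous.integrable_of_hasCompactSupport (by fun_prop) ?_
    exact (hgc.comp_homeomorph (Homeomorph.subLeft θ)).mul_right
  rw [e1, polar2 volume hint]
  have e2 : ∀ r ∈ Ioi (0:ℝ), r ^ (Module.finrank ℝ (EE (2*m+3)) - 1) * ∫ σ : sphere (0 : EE (2*m+3)) 1, 
      g (θ - r • (σ : EE (2*m+3))) * Φ ((‖r • (σ : EE (2*m+3))‖^2 - c)/ε) ∂((volume : Measure (EE (2*m+3))).toSphere)
      = r^(2*m+2) * q r * Φ ((r^2 - c)/ε) := by
    intro r hr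
    have : ∀ σ : sphere (0 : EE (2*m+3)) 1, ‖r • (σ : EE (2*m+3))‖^2 = r^2 := by
      intro σ; rw [norm_smul]; simp
    simp_rw [this]
    rw [integral_mul_const, finrank_euclideanSpace_fin, show 2*m+3-1 = 2*m+2 by omega]
    ring
  rw [setIntegral_congr_fun measurableSet_Ioi e2]
  set a := √(c - ε) with ha
  set b := √(c + ε) with hb
  have ha0 : 0 ≤ a := Real.sqrt_nonneg _
  have hb0 : 0 ≤ b := Real.sqrt_nonneg _
  have ha2 : a^2 = c - ε := Real.sq_sqrt (by linarith)
  have hb2 : b^2 = c + ε := Real.sq_sqrt (by linarith)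
  have hab : a ≤ b := Real.sqrt_le_sqrt (by linarith)
  have e3 : ∫ r in Ioi (0:ℝ), r^(2*m+2) * q r * Φ ((r^2 - c)/ε) = ∫ r in a..b, r^(2*m+2) * q r * Φ ((r^2 - c)/ε) := by
    rw [intervalIntegral.integral_of_le hab]
    refine setIntegral_eq_of_subset_of_forall_sdiff_eq_zero measurableSet_Ioi (fun r hr => lt_of_le_of_lt ha0 hr.1) ?_
    rintro r ⟨hr, hr2⟩
    have hr : 0 < r := hr
    rw [hz, mul_zero]
    rw [abs_div, abs_of_pos hε, le_div_iff₀ hε, one_mul]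
    by_cases h : a < r
    · have : b < r := by
        by_contra h'
        exact hr2 ⟨h, not_lt.1 h'⟩
      refine le_trans ?_ (le_abs_self _)
      nlinarith
    · refine le_trans ?_ (neg_le_abs _)
      nlinarith [not_lt.1 h]
  have e4 := intervalIntegral.integral_comp_mul_deriv (a := a) (b := b) (f := fun r => (r^2 - c)/ε) (f' := fun r => 2 * r/ε)
    (g := fun b => (√(c + ε * b))^(2*m+1) * q (√(c + ε * b)) * Φ b) (fun r _ => by
      have := (((hasDerivAt_id r).pow 2).sub_const c).div_const ε
      simpa using this) (by fun_prop) (by fun_prop)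
  rw [show (a^2 - c)/ε = -1 by rw [ha2]; field_simp; ring, show (b^2 - c)/ε = 1 by rw [hb2]; field_simp; ring] at e4
  rw [e3, ← e4, ← intervalIntegral.integral_const_mul]
  refine intervalIntegral.integral_congr fun r hr => ?_
  rw [uIcc_of_le hab] at hr
  have hr0 : 0 ≤ r := ha0.trans hr.1
  have : c + ε * ((r^2 - c)/ε) = r^2 := by field_simp; ring
  simp only [Function.comp, this, Real.sqrt_sq hr0]
  ring

theorem fubini_theta {n : ℕ} (g : EE n → ℝ) (hg : Continuous g) (hgc : HasCompactSupport g)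
    (Φ : ℝ → ℝ) (hΦ : Continuous Φ) (C : ℝ) (hC : ∀ b, |Φ b| ≤ C) (x : EE n) (ε : ℝ) :
    ∫ θ : sphere (0 : EE n) 1, (∫ y, g y * Φ ((‖y - θ‖^2 - ‖x - θ‖^2)/ε)) ∂((volume : Measure (EE n)).toSphere)
    = ∫ y, g y * ∫ θ : sphere (0 : EE n) 1, Φ (((‖y‖^2 - ‖x‖^2) + 2 * inner ℝ (θ : EE n) (x - y))/ε) ∂((volume : Measure (EE n)).toSphere) := by
  rw [integral_integral_swap]
  · congr 1; funext y
    rw [integral_const_mul]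
    congr 2; funext θ
    congr 2
    rw [@norm_sub_sq ℝ, @norm_sub_sq ℝ, inner_sub_right, real_inner_comm, real_inner_comm x]
    simp
    ring
  · have h1 : Integrable (fun z : sphere (0 : EE n) 1 × EE n => C * ‖g z.2‖) (((volume : Measure (EE n)).toSphere).prod volume) :=
      (integrable_const C).mul_prod (hg.integrable_of_hasCompactSupport hgc).norm
    refine h1.mono' ?_ (.of_forall fun z => ?_)
    · refine Continuous.aestronglyMeasurable ?_
      change Continuous fun z : sphere (0 : EE n) 1 × EE n => g z.2 * Φ ((‖z.2 - z.1‖^2 - ‖x - z.1‖^2)/ε)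
      fun_prop
    · simp only [Function.uncurry, norm_mul, mul_comm C]
      gcongr
      exact hC _

theorem kernel_limit {φ : ℝ → ℝ} (h : IsBump φ) (m : ℕ) (g : EE (2*m+3) → ℝ) (hg : Continuous g) (hgc : HasCompactSupport g)
    (hgs : ∀ y, g y ≠ 0 → ‖y‖ ≤ 1) (x : EE (2*m+3)) (hx : ‖x‖ < 1) :
    Tendsto (fun ε : ℝ => ∫ y, g y * ((ε^(2*m+1))⁻¹ * ∫ θ : sphere (0 : EE (2*m+3)) 1, iteratedDeriv (2*m) φ (((‖y‖^2 - ‖x‖^2) + 2 * inner ℝ (θ : EE (2*m+3)) (x - y))/ε) ∂((volume : Measure (EE (2*m+3))).toSphere)))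
     (𝓝[>] 0) (𝓝 (∫ y, g y * (cc m * ((-1)^m * (2*m).factorial * (1 / (2 * ‖x - y‖)) ^ (2*m+1))))) := by
  obtain ⟨C, hCpos, hC⟩ := h.bdd (2*m)
  set μ := (volume : Measure (EE (2*m+3))).toSphere with hμ
  set δ := 1 - ‖x‖ with hδ
  have hδ0 : 0 < δ := by linarith
  have hae : ∀ᵐ y : EE (2*m+3), y ≠ x := by
    simp [ae_iff]
  -- exact value
  have hval : ∀ y, g y ≠ 0 → y ≠ x → ∀ ε, 0 < ε → ε ≤ δ * ‖y - x‖ → 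
     (ε^(2*m+1))⁻¹ * ∫ θ : sphere (0 : EE (2*m+3)) 1, iteratedDeriv (2*m) φ (((‖y‖^2 - ‖x‖^2) + 2 * inner ℝ (θ : EE (2*m+3)) (x - y))/ε) ∂μ
     = cc m * ((-1)^m * (2*m).factorial * (1 / (2 * ‖x - y‖)) ^ (2*m+1)) := by
    intro y hgy hyx ε hε hle
    have hpos : 0 < ‖x - y‖ := norm_pos_iff.2 (sub_ne_zero.2 hyx.symm)
    rw [kernel_eq h m (x - y) _ ε (sub_ne_zero.2 hyx.symm) hε]
    · rw [div_pow, div_pow, one_pow]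
      field_simp
    · rw [norm_sub_rev] at hle
      have h1 : |‖y‖^2 - ‖x‖^2| ≤ ‖x - y‖ * (1 + ‖x‖) := by
        rw [sq_sub_sq, abs_mul, mul_comm]
        have := abs_norm_sub_norm_le y x
        rw [norm_sub_rev] at this
        have h2 := hgs y hgy
        rw [abs_of_nonneg (by positivity : 0 ≤ ‖y‖ + ‖x‖)]
        gcongr
      calc _ ≤ ‖x - y‖ * (1 + ‖x‖) + δ * ‖x - y‖ := add_le_add h1 hle
        _ = _ := by rw [hδ]; ring
  have hbd : ∀ y ε, ‖∫ θ : sphere (0 : EE (2*m+3)) 1, iteratedDeriv (2*m) φ (((‖y‖^2 - ‖x‖^2) + 2 * inner ℝ (θ : EE (2*m+3)) (x - y))/ε) ∂μ‖ ≤ C * μ.real univ := 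
    fun y ε => norm_integral_le_of_norm_le_const (.of_forall fun θ => hC _)
  set A := |cc m * ((-1)^m * (2*m).factorial)| with hA
  set B := A * (1/2)^(2*m+1) + C * μ.real univ * (δ^(2*m+1))⁻¹ with hB
  have hμ0 : 0 ≤ μ.real univ := measureReal_nonneg
  have hsing := (sing_integrable (2*m+2) (2*m+1) (by omega) x (fun y => |g y|) hg.abs hgc.norm).const_mul B
  refine tendsto_integral_filter_of_dominated_convergence _ ?_ ?_ hsing ?_
  · filter_upwards [self_mem_nhdsWithin] with ε hε
    refine Continuous.aestronglyMeasurable (hg.mul (continuous_const.mul ?_))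
    refine param_cont (X := EE (2*m+3)) μ (F := fun p : EE (2*m+3) × EE (2*m+3) => iteratedDeriv (2*m) φ (((‖p.1‖^2 - ‖x‖^2) + 2 * inner ℝ p.2 (x - p.1))/ε)) ?_
    exact (h.cont _).comp (by fun_prop)
  · filter_upwards [self_mem_nhdsWithin] with ε hε
    have hε : 0 < ε := hε
    filter_upwards [hae] with y hy
    by_cases hgy : g y = 0
    · simp [hgy]
    have hpos : 0 < ‖y - x‖ := norm_pos_iff.2 (sub_ne_zero.2 hy)
    have key : ‖(ε^(2*m+1))⁻¹ * ∫ θ : sphere (0 : EE (2*m+3)) 1, iteratedDeriv (2*m) φ (((‖y‖^2 - ‖x‖^2) + 2 * inner ℝ (θ : EE (2*m+3)) (x - y))/ε) ∂μ‖ ≤ B * (‖y - x‖^(2*m+1))⁻¹ := by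
      by_cases hle : ε ≤ δ * ‖y - x‖
      · rw [hval y hgy hy ε hε hle, ← mul_assoc, norm_mul, Real.norm_eq_abs, ← hA, norm_pow, Real.norm_eq_abs,
          norm_sub_rev, abs_of_nonneg (by positivity), hB, add_mul]
        have : A * (1 / (2 * ‖y - x‖)) ^ (2*m+1) = A * (1/2)^(2*m+1) * (‖y - x‖^(2*m+1))⁻¹ := by
          rw [div_pow, div_pow, mul_pow]; field_simp
        rw [this]
        have : 0 ≤ C * μ.real univ * (δ^(2*m+1))⁻¹ * (‖y - x‖^(2*m+1))⁻¹ := by positivity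
        linarith
      · rw [norm_mul, norm_inv, norm_pow, Real.norm_of_nonneg hε.le, hB, add_mul]
        have h1 : (ε^(2*m+1))⁻¹ ≤ (δ^(2*m+1))⁻¹ * (‖y - x‖^(2*m+1))⁻¹ := by
          rw [← mul_inv, ← mul_pow]
          have := (not_le.1 hle).le
          gcongr
        have h2 : 0 ≤ A * (1/2)^(2*m+1) * (‖y - x‖^(2*m+1))⁻¹ := by positivity
        have h3 := mul_le_mul h1 (hbd y ε) (norm_nonneg _) (by positivity)
        linarith
    rw [norm_mul, Real.norm_eq_abs]
    calc _ ≤ |g y| * (B * (‖y - x‖^(2*m+1))⁻¹) := by gcongr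
      _ = _ := by ring
  · filter_upwards [hae] with y hy
    by_cases hgy : g y = 0
    · simp [hgy]
    refine tendsto_const_nhds.congr' ?_
    have hpos : 0 < δ * ‖y - x‖ := mul_pos hδ0 (norm_pos_iff.2 (sub_ne_zero.2 hy))
    filter_upwards [Ioc_mem_nhdsGT hpos] with ε hε
    rw [hval y hgy hy ε hε.1 hε.2]

end assembly

end Part7

section Part8
open MeasureTheory Metric Set Measure Filter Topology
section final

theorem sphere_dist {n : ℕ} (x : EE n) (θ : sphere (0 : EE n) 1) : 1 - ‖x‖ ≤ ‖x - θ‖ := by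
  have := norm_sub_norm_le (θ : EE n) x
  rw [norm_sub_rev] at this
  simpa using this

theorem main_limit {n : ℕ} (W : EE n → ℝ → ℝ) 
    (hW : ContinuousOn (fun p : EE n × ℝ => W p.1 p.2) (univ ×ˢ Ioi 0)) {φ : ℝ → ℝ} (hφ : IsBump φ) 
    (x : EE n) (hx : ‖x‖ < 1) (μ : Measure (sphere (0 : EE n) 1)) [IsFiniteMeasure μ] :
    Tendsto (fun ε : ℝ => ∫ θ : sphere (0 : EE n) 1, (∫ b in (-1:ℝ)..1, W θ (√(‖x - θ‖^2 + ε * b)) * φ b) ∂μ)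
      (𝓝[>] 0) (𝓝 (∫ θ : sphere (0 : EE n) 1, W θ ‖x - θ‖ ∂μ)) := by
  set δ := 1 - ‖x‖ with hδ
  have hδ0 : 0 < δ := by linarith
  have hc : ∀ θ : sphere (0 : EE n) 1, δ^2 ≤ ‖x - θ‖^2 := fun θ => by
    have := sphere_dist x θ
    gcongr
  have hφc : Continuous φ := hφ.smooth.continuous
  set U : EE n → ℝ → ℝ := fun θ u => W θ (√(max u (δ^2/2))) with hU
  have hUc : Continuous (fun p : EE n × ℝ => U p.1 p.2) := by
    have : Continuous (fun p : EE n × ℝ => (p.1, √(max p.2 (δ^2/2)))) := by fun_prop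
    refine hW.comp_continuous this fun p => ⟨mem_univ _, ?_⟩
    have : 0 < max p.2 (δ^2/2) := lt_max_of_lt_right (by positivity)
    exact Real.sqrt_pos.2 this
  have hin : Continuous (fun p : ℝ × EE n => ∫ b in (-1:ℝ)..1, U p.2 (‖x - p.2‖^2 + p.1 * b) * φ b) := by
    apply intervalIntegral.continuous_parametric_intervalIntegral_of_continuous'
    refine Continuous.mul ?_ (by fun_prop)
    exact hUc.comp (g := fun p : EE n × ℝ => U p.1 p.2) (f := fun q : (ℝ × EE n) × ℝ => (q.1.2, ‖x - q.1.2‖^2 + q.1.1 * q.2)) (by fun_prop)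
  have hout := param_cont μ hin
  have h0 := (hout.tendsto 0).mono_left (nhdsWithin_le_nhds (s := Ioi 0))
  have e0 : ∫ θ : sphere (0 : EE n) 1, (∫ b in (-1:ℝ)..1, U θ (‖x - θ‖^2 + 0 * b) * φ b) ∂μ = ∫ θ : sphere (0 : EE n) 1, W θ ‖x - θ‖ ∂μ := by
    congr 1; funext θ
    simp only [zero_mul, add_zero]
    rw [intervalIntegral.integral_const_mul, hφ.int, mul_one, hU]
    simp only
    rw [max_eq_left (by nlinarith [hc θ]), Real.sqrt_sq (norm_nonneg _)]
  rw [e0] at h0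
  refine h0.congr' ?_
  filter_upwards [Ioc_mem_nhdsGT (show 0 < δ^2/2 by positivity)] with ε hε
  congr 1; funext θ
  refine intervalIntegral.integral_congr fun b hb => ?_
  rw [uIcc_of_le (by norm_num)] at hb
  simp only [hU]
  rw [max_eq_left]
  have := hc θ
  nlinarith [hb.1, hε.1, hε.2]

theorem main_id (m : ℕ) (f : EE (2*m+3) → ℝ) (hf : ContDiff ℝ (⊤ : ℕ∞) f) (hfc : HasCompactSupport f)
    (hsupp : tsupport f ⊆ ball (0 : EE (2*m+3)) 1) (A : ℝ) (ψ : EE (2*m+3) → ℝ → ℝ)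
    (hψ : ∀ θ t, ψ θ t = A * ∫ σ : sphere (0 : EE (2*m+3)) 1, lap f (θ - t • (σ : EE (2*m+3))) ∂((volume : Measure (EE (2*m+3))).toSphere))
    (x : EE (2*m+3)) (hx : ‖x‖ < 1) :
    ∫ θ : sphere (0 : EE (2*m+3)) 1, Dop^[2*m] (fun s => s^(2*m+1) * ψ θ s) ‖x - θ‖ ∂((volume : Measure (EE (2*m+3))).toSphere)
    = 2 * A * (cc m * ((-1)^m * (2*m).factorial * (1/2)^(2*m+1))) *
      (-((2*m+1 : ℕ) * (volume : Measure (EE (2*m+3))).toSphere.real univ * f x)) := by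
  set μ := (volume : Measure (EE (2*m+3))).toSphere with hμ
  obtain ⟨φ, hφ⟩ := exists_bump
  obtain ⟨C, -, hC⟩ := hφ.bdd (2*m)
  have hgs := lap_smooth hf
  have hgcont := hgs.continuous
  have hgc := lap_compact hfc
  set W : EE (2*m+3) → ℝ → ℝ := fun θ s => s^(2*m+1) * ψ θ s with hWdef
  have hW : ContDiffOn ℝ (⊤ : ℕ∞) (fun p : EE (2*m+3) × ℝ => W p.1 p.2) (univ ×ˢ Ioi 0) := by
    refine ContDiff.contDiffOn ?_
    simp only [hWdef, hψ]
    refine ContDiff.mul (by fun_prop) (contDiff_const.mul ?_)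
    refine param_smooth' μ (fun q : (EE (2*m+3) × ℝ) × EE (2*m+3) => lap f (q.1.1 - q.1.2 • q.2)) (hgs.comp (by fun_prop))
  have l1 := main_limit (fun θ => Dop^[2*m] (W θ)) (dop_iter_smooth hW (2*m)).continuousOn hφ x hx μ
  have l2 := (kernel_limit hφ m (lap f) hgcont hgc (fun y hy => by
    have := hsupp (lap_supp hy)
    rw [mem_ball_zero_iff] at this
    exact this.le) x hx).const_mul (2*A)
  have hδ0 : 0 < 1 - ‖x‖ := by linarith
  have l3 := l2.congr' (f₂ := fun ε : ℝ => ∫ θ : sphere (0 : EE (2*m+3)) 1, (∫ b in (-1:ℝ)..1, Dop^[2*m] (W θ) (√(‖x - θ‖^2 + ε * b)) * φ b) ∂μ) (by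
    filter_upwards [Ioo_mem_nhdsGT (show 0 < (1 - ‖x‖)^2 by positivity)] with ε hε
    have hε0 := hε.1
    have e1 : ∀ θ : sphere (0 : EE (2*m+3)) 1, ∫ b in (-1:ℝ)..1, Dop^[2*m] (W θ) (√(‖x - θ‖^2 + ε * b)) * φ b
        = ((ε^(2*m))⁻¹ * (A * (2/ε))) * ∫ y, lap f y * iteratedDeriv (2*m) φ ((‖y - θ‖^2 - ‖x - θ‖^2)/ε) := by
      intro θ
      have hlt : ε < ‖x - θ‖^2 := lt_of_lt_of_le hε.2 (by have := sphere_dist x θ; gcongr)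
      rw [ibp_theta hW hφ m θ _ ε hε.1 hlt, mul_assoc, mul_assoc, ← subst_theta m (lap f) hgcont hgc _ (hφ.cont (2*m)) (hφ.zero (2*m)) θ _ ε hε.1 hlt,
        ← intervalIntegral.integral_const_mul A]
      congr 1
      refine intervalIntegral.integral_congr fun b _ => ?_
      simp only [hWdef, hψ]
      ring
    simp_rw [e1]
    rw [integral_const_mul, fubini_theta (lap f) hgcont hgc _ (hφ.cont (2*m)) C hC x ε, ← integral_const_mul, ← integral_const_mul]
    congr 1; funext y
    rw [pow_succ]
    field_simp)
  rw [tendsto_nhds_unique l1 l3]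
  rw [mul_assoc (2*A)]
  congr 1
  have hN := newton (2*m+1) hf hfc x
  rw [← hN, ← integral_const_mul]
  congr 1; funext y
  rw [norm_sub_rev x y, one_div, one_div, mul_inv, mul_pow, inv_pow ‖y - x‖]
  ring

theorem sphere_area (n : ℕ) (hn : 0 < n) : (volume : Measure (EE n)).toSphere.real univ =
    2 * Real.pi ^ ((n : ℝ) / 2) / Real.Gamma ((n : ℝ) / 2) := by
  have : Nonempty (Fin n) := ⟨⟨0, hn⟩⟩
  have hn' : (0:ℝ) < n := by exact_mod_cast hn
  rw [toSphere_real_apply_univ, Measure.real, EuclideanSpace.volume_ball]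
  simp only [finrank_euclideanSpace_fin, Fintype.card_fin, ENNReal.ofReal_one, one_pow, one_mul]
  rw [ENNReal.toReal_ofReal (by positivity), Real.Gamma_add_one (by positivity), Real.sqrt_eq_rpow, ← Real.rpow_natCast, ← Real.rpow_mul Real.pi_pos.le]
  have : Real.Gamma ((n:ℝ)/2) ≠ 0 := (Real.Gamma_pos_of_pos (by positivity)).ne'
  rw [show (1/2:ℝ) * n = n/2 by ring]
  field_simp

theorem cc_eq (m : ℕ) : cc m = 2 * Real.pi^(m+1) / m.factorial := by
  unfold cc
  have := sphere_area (2*m+2) (by omega)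
  rw [toSphere_real_apply_univ] at this
  simp only [finrank_euclideanSpace_fin] at this
  rw [this, show ((2*m+2:ℕ):ℝ)/2 = (m:ℝ) + 1 by push_cast; ring, Real.Gamma_nat_eq_factorial]
  norm_cast

theorem const_eq (m : ℕ) : ((-1 : ℝ) ^ (m+1) * Real.pi ^ (1 - ((2*m+3:ℕ) : ℝ) / 2) /
            (4 * Real.Gamma (((2*m+3:ℕ) : ℝ) / 2))) * (2 * (cc m * ((-1)^m * (2*m).factorial * (1/2)^(2*m+1))) * (-((2*m+1:ℕ) : ℝ))) = 1 := by
  have hd := Real.Gamma_mul_Gamma_add_half ((m:ℝ)+1)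
  have e1 : ((2*m+3:ℕ) : ℝ) / 2 = (m:ℝ) + 1 + 1/2 := by push_cast; ring
  rw [e1, cc_eq]
  rw [Real.Gamma_nat_eq_factorial, show 2 * ((m:ℝ)+1) = ((2*m+1:ℕ):ℝ) + 1 by push_cast; ring, Real.Gamma_nat_eq_factorial] at hd
  have hp : Real.pi ^ (1 - ((m:ℝ) + 1 + 1/2)) * Real.pi^(m+1) = √Real.pi := by
    rw [← Real.rpow_natCast, ← Real.rpow_add Real.pi_pos, Real.sqrt_eq_rpow]
    congr 1; push_cast; ring
  have h2 : (2:ℝ) ^ (1 - (((2*m+1:ℕ):ℝ) + 1)) = (1/2)^(2*m+1) := by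
    rw [show (1 - (((2*m+1:ℕ):ℝ) + 1)) = -((2*m+1:ℕ):ℝ) by ring, Real.rpow_neg (by norm_num), Real.rpow_natCast]
    simp
  rw [h2] at hd
  have hf : ((2*m+1).factorial : ℝ) = (2*m+1:ℕ) * (2*m).factorial := by
    rw [Nat.factorial_succ]; push_cast; ring
  rw [hf] at hd
  have hG : Real.Gamma ((m:ℝ) + 1 + 1/2) ≠ 0 := (Real.Gamma_pos_of_pos (by positivity)).ne'
  have hm : (m.factorial : ℝ) ≠ 0 := by positivity
  have hs : (-1:ℝ)^(m+1) * (-1)^m = -1 := by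
    rw [← pow_add, show m + 1 + m = 2*m+1 by ring, pow_succ, pow_mul]; simp
  set G := Real.Gamma ((m:ℝ) + 1 + 1/2) with hGdef
  set P := Real.pi ^ (1 - ((m:ℝ) + 1 + 1/2)) with hPdef
  calc _ = -((-1:ℝ)^(m+1) * (-1)^m) * (P * Real.pi^(m+1)) * ((2*m+1:ℕ) * (2*m).factorial * (1/2)^(2*m+1)) / (G * m.factorial) := by
        field_simp
        ring
    _ = 1 := by
      rw [hs, hp, div_eq_one_iff_eq (by positivity), mul_comm G, hd]; ring

end final

end Part8

/-- inversion of the spherical mean transform via the spherical means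
`ψ_θ = (M(Δf))(θ,·)` of the Laplacian of `f`, for `n ≥ 3` odd. -/
theorem spherical_mean_inversion_via_laplacian
    (n : ℕ) (hn3 : 3 ≤ n) (hodd : Odd n)
    (f : EuclideanSpace ℝ (Fin n) → ℝ)
    (hf : ContDiff ℝ (⊤ : ℕ∞) f) (hfc : HasCompactSupport f)
    (hsupp : tsupport f ⊆ ball (0 : EuclideanSpace ℝ (Fin n)) 1)
    -- `ψ_θ(t) = (M(Δf))(θ,t)`, the spherical mean of the Laplacian of `f`
    (ψ : EuclideanSpace ℝ (Fin n) → ℝ → ℝ)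
    (hψ : ∀ θ : EuclideanSpace ℝ (Fin n), ∀ t : ℝ,
      ψ θ t = (1 / (2 * Real.pi ^ ((n : ℝ) / 2) / Real.Gamma ((n : ℝ) / 2))) *
        ∫ σ : sphere (0 : EuclideanSpace ℝ (Fin n)) 1,
          lap f (θ - t • (σ : EuclideanSpace ℝ (Fin n))) ∂(sphereMeasure n))
    (x : EuclideanSpace ℝ (Fin n)) (hx : x ∈ ball (0 : EuclideanSpace ℝ (Fin n)) 1) :
    f x = ((-1 : ℝ) ^ ((n - 1) / 2) * Real.pi ^ (1 - (n : ℝ) / 2) /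
            (4 * Real.Gamma ((n : ℝ) / 2))) *
      ∫ θ : sphere (0 : EuclideanSpace ℝ (Fin n)) 1,
        Dop^[n - 3] (fun s => s ^ (n - 2) * ψ (θ : EuclideanSpace ℝ (Fin n)) s)
          ‖x - (θ : EuclideanSpace ℝ (Fin n))‖ ∂(sphereMeasure n) := by
  obtain ⟨m, rfl⟩ : ∃ m, n = 2*m+3 := by
    obtain ⟨k, hk⟩ := hodd
    exact ⟨k - 1, by omega⟩
  rw [show 2*m+3-3 = 2*m by omega, show 2*m+3-2 = 2*m+1 by omega, show (2*m+3-1)/2 = m+1 by omega]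
  rw [← sphere_area (2*m+3) (by omega)] at hψ
  have h := main_id m f hf hfc hsupp _ ψ hψ x (by simpa using hx)
  unfold sphereMeasure
  rw [h]
  have hA : (volume : Measure (EE (2*m+3))).toSphere.real Set.univ ≠ 0 := by
    rw [sphere_area (2*m+3) (by omega)]
    have : Real.Gamma (((2*m+3:ℕ):ℝ)/2) ≠ 0 := (Real.Gamma_pos_of_pos (by positivity)).ne'
    positivity
  have hc := const_eq m
  set S := (volume : Measure (EE (2*m+3))).toSphere.real Set.univ
  set Q := ((-1 : ℝ) ^ (m+1) * Real.pi ^ (1 - ((2*m+3:ℕ) : ℝ) / 2) / (4 * Real.Gamma (((2*m+3:ℕ) : ℝ) / 2)))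
  calc f x = (Q * (2 * (cc m * ((-1)^m * (2*m).factorial * (1/2)^(2*m+1))) * (-((2*m+1:ℕ) : ℝ)))) * f x := by
        rw [hc, one_mul]
    _ = _ := by
      field_simp
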